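/- Let x ∈ Ω with E-segment decomposition x = X₁X₂⋯. Then the F-segment decomposition of g(x) is g₀(X₁)g₀(X₂)⋯; that is, each word g₀(X_j) is an F-segment of g(x) occupying the corresponding positions. -/

import Mathlib

/-!
Inside a word `g₀(X)` with `X` an `E`-special segment, the letters `3` and `4` occur only in first
place, and `g₀(X)` starts with one of them (`BlockImage` lists the possible shapes of a block and
its image). Two facts follow.

* If `X_j` is `E`-special, then `g₀(X_j)` is `F`-special (`BlockImage.fSpecial`). The only condition
  involving a letter outside the block is the letter `≠ 5` after `42^{k-1}5 = g₀(35^k)`: a block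
  whose image starts with `5` is a plain `5` (`BlockImage.plain_of_head`), whereas `35^k` is not
  followed by `5` in `x`.
* If `X_j` is `E`-plain, suppose that an `F`-special segment of `u` starting at `p` covers it. As
  `u p ∈ {3, 4}`, the position `p` is the start of some block. If that block is special, its image
  is `F`-special at `p`, so it is the given segment (`FSpecial.length_unique`), and it cannot cover
  another block. If it is plain, then the following letters `2` and `5` of the segment, up to
  the first `5`, are read one after another at block starts, hence are plain and unchanged in `x`;
  so `x` has `35` or `42^m5` at `p`, which puts `p` in an `E`-special segment. For `35` this uses
  that `x` is eventually `4`, so the run of `5`s ends (`exists_eSpecial_of_three_five`).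
-/

open MeasureTheory

noncomputable section

/-- The alphabet `{1,…,5}`, encoded as `Fin 5` (letter `k` is index `k-1`). -/
abbrev Letter := Fin 5

/-- The letter `1`. -/
def l1 : Letter := 0
/-- The letter `2`. -/
def l2 : Letter := 1
/-- The letter `3`. -/
def l3 : Letter := 2
/-- The letter `4`. -/
def l4 : Letter := 3
/-- The letter `5`. -/
def l5 : Letter := 4

/-- The digit set of `E`: `(d_1,…,d_5) = (0, 1, 2, 2+i, 1+2i)`. -/
def dE : Letter → ℂ := ![0, 1, 2, 2 + Complex.I, 1 + 2 * Complex.I]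

/-- The digit set of `F`: `(e_1,…,e_5) = (1+2i, 1+i, 1, 0, 2+i)`. -/
def dF : Letter → ℂ := ![1 + 2 * Complex.I, 1 + Complex.I, 1, 0, 2 + Complex.I]

/-- The map `φ^E_j(z) = (z + d_j)/3`. -/
def phiE (j : Letter) (z : ℂ) : ℂ := (z + dE j) / 3

/-- The map `φ^F_j(z) = (z + e_j)/3`. -/
def phiF (j : Letter) (z : ℂ) : ℂ := (z + dF j) / 3

/-- For a finite word `w = w_1⋯w_n`, the composition `φ_{w_1} ∘ ⋯ ∘ φ_{w_n}`
(the empty word gives the identity). -/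
def iterPhi (φ : Letter → ℂ → ℂ) : List Letter → ℂ → ℂ
  | [] => id
  | j :: w => φ j ∘ iterPhi φ w

/-- `K` is the attractor of the IFS `{φ_j}`: the (unique) nonempty compact set with
`K = ⋃_j φ_j(K)`. -/
def IsAttractor (φ : Letter → ℂ → ℂ) (K : Set ℂ) : Prop :=
  K.Nonempty ∧ IsCompact K ∧ K = ⋃ j, φ j '' K

/-- The prefix `x_1⋯x_n` of the sequence `x`. -/
def preWord (x : ℕ → Letter) (n : ℕ) : List Letter := List.ofFn fun i : Fin n => x i

/-- The factor `x_{j+1}⋯x_{j+L}` of `x` (`j` entries skipped, length `L`). -/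
def fword (x : ℕ → Letter) (j L : ℕ) : List Letter := List.ofFn fun i : Fin L => x (j + i)

/-- `p = π_K(x)`, i.e. `p` is the point of `⋂_{n≥1} φ_{x_1⋯x_n}(K)`. -/
def codes (φ : Letter → ℂ → ℂ) (K : Set ℂ) (x : ℕ → Letter) (p : ℂ) : Prop :=
  ∀ n, p ∈ iterPhi φ (preWord x n) '' K

/-- `Ω`: the sequences that are eventually constant equal to the letter `4`. -/
def OmegaSeq : Set (ℕ → Letter) := {x | ∃ N, ∀ n, N ≤ n → x n = l4}

/-- `Λ(x,y) = n`: the separation number of `(x,y)` for the IFS `φ` with attractor `K`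
is `n`, i.e. `n` is the largest integer with `φ_{x_1⋯x_n}(K) ∩ φ_{y_1⋯y_n}(K) ≠ ∅`. -/
def SepNum (φ : Letter → ℂ → ℂ) (K : Set ℂ) (x y : ℕ → Letter) (n : ℕ) : Prop :=
  (iterPhi φ (preWord x n) '' K ∩ iterPhi φ (preWord y n) '' K).Nonempty ∧
    ∀ m, n < m → iterPhi φ (preWord x m) '' K ∩ iterPhi φ (preWord y m) '' K = ∅

/-- The factor of `x` starting at position `j` (0-indexed) of length `L` is an
`E`-special segment: either `35^k` followed by a letter `≠ 5` (so `L = k+1`, `k ≥ 1`),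
or `42^{k-1}5` (so `L = k+1`, `k ≥ 1`). -/
def ESpecial (x : ℕ → Letter) (j L : ℕ) : Prop :=
  (2 ≤ L ∧ x j = l3 ∧ (∀ i, 1 ≤ i → i < L → x (j + i) = l5) ∧ x (j + L) ≠ l5) ∨
  (2 ≤ L ∧ x j = l4 ∧ (∀ i, 1 ≤ i → i < L - 1 → x (j + i) = l2) ∧ x (j + L - 1) = l5)

/-- The entry of `x` at position `j` is an `E`-plain segment: it belongs to no
`E`-special segment of `x`. -/
def EPlain (x : ℕ → Letter) (j : ℕ) : Prop :=
  ∀ p L, ESpecial x p L → ¬(p ≤ j ∧ j < p + L)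

/-- An `E`-segment: an `E`-special segment, or a single `E`-plain entry. -/
def ESegment (x : ℕ → Letter) (j L : ℕ) : Prop :=
  ESpecial x j L ∨ (L = 1 ∧ EPlain x j)

/-- The factor of `u` starting at position `j` of length `L` is an `F`-special segment:
`42^m5` followed by a letter `≠ 5` (`L = m+2`, `m ≥ 0`), or `42^m55` (`L = m+3`, `m ≥ 0`),
or `35` (`L = 2`). -/
def FSpecial (u : ℕ → Letter) (j L : ℕ) : Prop :=
  (2 ≤ L ∧ u j = l4 ∧ (∀ i, 1 ≤ i → i < L - 1 → u (j + i) = l2) ∧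
    u (j + L - 1) = l5 ∧ u (j + L) ≠ l5) ∨
  (3 ≤ L ∧ u j = l4 ∧ (∀ i, 1 ≤ i → i < L - 2 → u (j + i) = l2) ∧
    u (j + L - 2) = l5 ∧ u (j + L - 1) = l5) ∨
  (L = 2 ∧ u j = l3 ∧ u (j + 1) = l5)

/-- The entry of `u` at position `j` is an `F`-plain segment. -/
def FPlain (u : ℕ → Letter) (j : ℕ) : Prop :=
  ∀ p L, FSpecial u p L → ¬(p ≤ j ∧ j < p + L)

/-- An `F`-segment: an `F`-special segment, or a single `F`-plain entry. -/
def FSegment (u : ℕ → Letter) (j L : ℕ) : Prop :=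
  FSpecial u j L ∨ (L = 1 ∧ FPlain u j)

/-- `b` enumerates the starting positions of a factorization of `x` into consecutive
segments: `b 0 = 0` and for each `j`, the factor occupying positions `[b j, b (j+1))`
is a segment (in the sense of `Seg`). -/
def SegDecomp (Seg : (ℕ → Letter) → ℕ → ℕ → Prop) (x : ℕ → Letter) (b : ℕ → ℕ) : Prop :=
  b 0 = 0 ∧ ∀ j, Seg x (b j) (b (j + 1) - b j)

/-- The word map `g₀`: `35^k ↦ 42^{k-1}5`, `42^k5 ↦ 42^{k-1}55` (`k ≥ 1`), `45 ↦ 35`,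
and `a ↦ a` for single letters.  (All these maps preserve length.) -/
def g0 (w : List Letter) : List Letter :=
  if w.length ≤ 1 then w
  else if w = [l4, l5] then [l3, l5]
  else if w.headI = l3 then l4 :: (List.replicate (w.length - 2) l2 ++ [l5])
  else l4 :: (List.replicate (w.length - 3) l2 ++ [l5, l5])

/-- `u = g(x)`: for some `E`-segment decomposition `x = X₁X₂⋯` (with starting positions
`b`), the sequence `u` is `g₀(X₁)g₀(X₂)⋯`, each `g₀(X_j)` occupying the positions
of `X_j` (note that `g₀` preserves lengths). -/
def gRel (x u : ℕ → Letter) : Prop :=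
  ∃ b : ℕ → ℕ, SegDecomp ESegment x b ∧
    ∀ j, fword u (b j) (b (j + 1) - b j) = g0 (fword x (b j) (b (j + 1) - b j))

/-- `E' = π_E(Ω)`. -/
def Eset' (E : Set ℂ) : Set ℂ := {p | ∃ x ∈ OmegaSeq, codes phiE E x p}

/-- `F' = π_F(Ω)`. -/
def Fset' (F : Set ℂ) : Set ℂ := {q | ∃ u ∈ OmegaSeq, codes phiF F u q}

/-- The dimension `s = log 5 / log 3`. -/
def sDim : ℝ := Real.log 5 / Real.log 3

end

/-- The shape of `u` on the positions `[p, p + L)` when it reads there the image under `g₀` of an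
`E`-segment of `x`. The four alternatives are: a plain letter, `35^k ↦ 42^{k-1}5`, `45 ↦ 35`, and
`42^k5 ↦ 42^{k-1}55` with `k ≥ 1`. Of `x` only what the argument needs is recorded: plainness in
the first case, and in the second the letter `≠ 5` after `35^k`. -/
def BlockImage (x u : ℕ → Letter) (p L : ℕ) : Prop :=
  (L = 1 ∧ EPlain x p ∧ u p = x p) ∨
  (2 ≤ L ∧ x (p + L) ≠ l5 ∧ u p = l4 ∧ (∀ i, 1 ≤ i → i < L - 1 → u (p + i) = l2) ∧
    u (p + L - 1) = l5) ∨
  (L = 2 ∧ u p = l3 ∧ u (p + 1) = l5) ∨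
  (3 ≤ L ∧ u p = l4 ∧ (∀ i, 1 ≤ i → i < L - 2 → u (p + i) = l2) ∧
    u (p + L - 2) = l5 ∧ u (p + L - 1) = l5)

lemma fword_getElem? (x : ℕ → Letter) (p L i : ℕ) (h : i < L) :
    (fword x p L)[i]? = some (x (p + i)) := by
  simp [fword, h]

lemma fword_add_two (x : ℕ → Letter) (p K : ℕ) :
    fword x p (K + 2) = x p :: x (p + 1) :: fword x (p + 2) K := by
  simp only [fword, List.ofFn_succ, Fin.val_zero, Fin.val_succ, add_zero, zero_add]
  congr 3
  funext i
  congr 1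
  omega

lemma blockImage_of_eSegment {x u : ℕ → Letter} {p L : ℕ} (h : ESegment x p L)
    (hu : fword u p L = g0 (fword x p L)) : BlockImage x u p L := by
  have key : ∀ i, i < L → some (u (p + i)) = (g0 (fword x p L))[i]? := by
    intro i hi
    rw [← hu, fword_getElem? _ _ _ _ hi]
  rcases h with (⟨hL, h3, h5, hn⟩ | ⟨hL, h4, h2, h5⟩) | ⟨rfl, hp⟩
  · obtain ⟨K, rfl⟩ := Nat.exists_eq_add_of_le' hL
    have hg : g0 (fword x p (K + 2)) = l4 :: (List.replicate K l2 ++ [l5]) := by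
      rw [fword_add_two, h3]
      simp [g0, fword, l3, l4]
    rw [hg] at key
    refine Or.inr (Or.inl ⟨hL, hn, ?_, ?_, ?_⟩)
    · simpa using key 0 (by omega)
    · intro i hi hi'
      obtain ⟨i, rfl⟩ := Nat.exists_eq_add_of_le' hi
      have := key (i + 1) (by omega)
      rw [List.getElem?_cons_succ, List.getElem?_append_left (by simp; omega)] at this
      simpa [List.getElem?_replicate, show i < K by omega] using this
    · have := key (K + 1) (by omega)
      simpa using this
  · obtain ⟨K, rfl⟩ := Nat.exists_eq_add_of_le' hL
    rcases K with _ | K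
    · have h5' : x (p + 1) = l5 := h5
      have hg : g0 (fword x p (0 + 2)) = [l3, l5] := by
        rw [fword_add_two, h4, h5']
        simp [g0, fword]
      rw [hg] at key
      refine Or.inr (Or.inr (Or.inl ⟨rfl, ?_, ?_⟩))
      · simpa using key 0 (by omega)
      · simpa using key 1 (by omega)
    · have hg : g0 (fword x p (K + 1 + 2)) = l4 :: (List.replicate K l2 ++ [l5, l5]) := by
        rw [fword_add_two, h4]
        simp [g0, fword, l3, l4]
      rw [hg] at key
      refine Or.inr (Or.inr (Or.inr ⟨by omega, ?_, ?_, ?_, ?_⟩))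
      · simpa using key 0 (by omega)
      · intro i hi hi'
        obtain ⟨i, rfl⟩ := Nat.exists_eq_add_of_le' hi
        have := key (i + 1) (by omega)
        rw [List.getElem?_cons_succ, List.getElem?_append_left (by simp; omega)] at this
        simpa [List.getElem?_replicate, show i < K by omega] using this
      · have := key (K + 1) (by omega)
        exact (show u (p + (K + 1)) = l5 by simpa using this)
      · have := key (K + 2) (by omega)
        rw [List.getElem?_cons_succ, List.getElem?_append_right (by simp)] at this
        simpa using this
  · have := key 0 (by omega)
    refine Or.inl ⟨rfl, hp, ?_⟩
    simpa [g0, fword] using this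

lemma BlockImage.pos {x u : ℕ → Letter} {p L : ℕ} (h : BlockImage x u p L) : 1 ≤ L := by
  rcases h with h | h | h | h <;> omega

/-- Images of special segments start with `3` or `4`, so any other first letter is plain. -/
lemma BlockImage.plain_of_head {x u : ℕ → Letter} {p L : ℕ} (h : BlockImage x u p L)
    (h3 : u p ≠ l3) (h4 : u p ≠ l4) : L = 1 ∧ u p = x p := by
  rcases h with h | h | h | h
  · exact ⟨h.1, h.2.2⟩
  · exact absurd h.2.2.1 h4
  · exact absurd h.2.1 h3
  · exact absurd h.2.1 h4

/-- After its first letter, a block image contains only the letters `2` and `5`. -/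
lemma BlockImage.interior {x u : ℕ → Letter} {p L i : ℕ} (h : BlockImage x u p L)
    (hi : 1 ≤ i) (hL : i < L) : u (p + i) = l2 ∨ u (p + i) = l5 := by
  rcases h with h | ⟨h, -, -, h2, h5⟩ | ⟨h, -, h5⟩ | ⟨h, -, h2, h5, h5'⟩
  · omega
  · by_cases c : i < L - 1
    · exact Or.inl (h2 i hi c)
    · rw [show p + i = p + L - 1 by omega]; exact Or.inr h5
  · obtain rfl : i = 1 := by omega
    exact Or.inr h5
  · by_cases c : i < L - 2
    · exact Or.inl (h2 i hi c)
    · by_cases c' : i = L - 2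
      · rw [show p + i = p + L - 2 by omega]; exact Or.inr h5
      · rw [show p + i = p + L - 1 by omega]; exact Or.inr h5'

lemma BlockImage.fSpecial {x u : ℕ → Letter} {p L M : ℕ} (h : BlockImage x u p L)
    (hnext : BlockImage x u (p + L) M) :
    FSpecial u p L ∨ (L = 1 ∧ EPlain x p ∧ u p = x p) := by
  rcases h with h | ⟨h, hn, h4, h2, h5⟩ | h | h
  · exact Or.inr h
  · refine Or.inl (Or.inl ⟨h, h4, h2, h5, fun c => hn ?_⟩)
    rw [← (hnext.plain_of_head (by simp [c, l3, l5]) (by simp [c, l4, l5])).2, c]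
  · exact Or.inl (Or.inr (Or.inr h))
  · exact Or.inl (Or.inr (Or.inl h))

lemma FSpecial.head {u : ℕ → Letter} {p L : ℕ} (h : FSpecial u p L) : u p = l3 ∨ u p = l4 := by
  rcases h with h | h | h
  · exact Or.inr h.2.1
  · exact Or.inr h.2.1
  · exact Or.inl h.2.1

/-- The shape of an `F`-special segment starting with `4`: the first `5` stands at offset `m + 1`,
and the length is determined by `m` and by whether a second `5` follows. -/
lemma FSpecial.shape {u : ℕ → Letter} {p L : ℕ} (h : FSpecial u p L) (h4 : u p = l4) :
    ∃ m, (∀ i, 1 ≤ i → i < m + 1 → u (p + i) = l2) ∧ u (p + (m + 1)) = l5 ∧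
      ((L = m + 2 ∧ u (p + (m + 2)) ≠ l5) ∨ (L = m + 3 ∧ u (p + (m + 2)) = l5)) := by
  rcases h with ⟨hL, -, h2, h5, hn⟩ | ⟨hL, -, h2, h5, h5'⟩ | h
  · obtain ⟨m, rfl⟩ := Nat.exists_eq_add_of_le' hL
    exact ⟨m, h2, h5, Or.inl ⟨rfl, hn⟩⟩
  · obtain ⟨m, rfl⟩ := Nat.exists_eq_add_of_le' hL
    exact ⟨m, h2, h5, Or.inr ⟨rfl, h5'⟩⟩
  · exact absurd (h.2.1.symm.trans h4) (by decide)

lemma FSpecial.length_unique {u : ℕ → Letter} {p L M : ℕ} (h : FSpecial u p L)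
    (h' : FSpecial u p M) : L = M := by
  have h25 : l2 ≠ l5 := by decide
  by_cases h4 : u p = l4
  · obtain ⟨m, h2, h5, c⟩ := h.shape h4
    obtain ⟨n, k2, k5, d⟩ := h'.shape h4
    have hmn : m = n := by
      rcases lt_trichotomy m n with e | e | e
      · exact absurd ((k2 (m + 1) (by omega) (by omega)).symm.trans h5) h25
      · exact e
      · exact absurd ((h2 (n + 1) (by omega) (by omega)).symm.trans k5) h25
    subst hmn
    rcases c with c | c <;> rcases d with d | d
    · omega
    · exact absurd d.2 c.2
    · exact absurd c.2 d.2
    · omega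
  · rcases h with h | h | h
    · exact absurd h.2.1 h4
    · exact absurd h.2.1 h4
    · rcases h' with h' | h' | h'
      · exact absurd h'.2.1 h4
      · exact absurd h'.2.1 h4
      · omega

lemma exists_eSpecial_of_three_five {x : ℕ → Letter} (hx : x ∈ OmegaSeq) {p : ℕ}
    (h3 : x p = l3) (h5 : x (p + 1) = l5) : ∃ L, ESpecial x p L := by
  obtain ⟨N, hN⟩ := hx
  have hex : ∃ k, x (p + 1 + k) ≠ l5 := ⟨N, by rw [hN _ (by omega)]; decide⟩
  classical
  have h0 : Nat.find hex ≠ 0 := fun c => by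
    have := Nat.find_spec hex
    rw [c] at this
    exact this h5
  refine ⟨1 + Nat.find hex, Or.inl ⟨by omega, h3, fun i hi hi' => ?_, ?_⟩⟩
  · have := Nat.find_min hex (m := i - 1) (by omega)
    rw [not_not] at this
    rwa [show p + i = p + 1 + (i - 1) by omega]
  · rw [← add_assoc]
    exact Nat.find_spec hex

lemma not_ePlain_of_eSpecial {x : ℕ → Letter} {p L : ℕ} (h : ESpecial x p L) : ¬ EPlain x p := by
  intro hp
  refine hp p L h ⟨le_rfl, ?_⟩
  rcases h with h | h <;> omega

/-- Every position lies in a block of a strictly increasing sequence of cuts starting at `0`. -/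
lemma exists_block {b : ℕ → ℕ} (h0 : b 0 = 0) (hlt : ∀ j, b j < b (j + 1)) (n : ℕ) :
    ∃ j, b j ≤ n ∧ n < b (j + 1) := by
  induction n with
  | zero => exact ⟨0, h0.le, (Nat.zero_le _).trans_lt (hlt 0)⟩
  | succ n ih =>
    obtain ⟨j, hj, hj'⟩ := ih
    by_cases c : n + 1 < b (j + 1)
    · exact ⟨j, by omega, c⟩
    · exact ⟨j + 1, by omega, by have := hlt (j + 1); omega⟩

/-- If `x ∈ Ω` has `E`-segment decomposition `x = X₁X₂⋯` (starting
positions `b`) and `u` is the sequence `g₀(X₁)g₀(X₂)⋯` (each `g₀(X_j)` occupying the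
positions of `X_j`), then `g₀(X₁)g₀(X₂)⋯` is the `F`-segment decomposition of `u = g(x)`:
each `g₀(X_j)` is an `F`-segment of `u` at the corresponding positions. -/
theorem stmt7 (x : ℕ → Letter) (hx : x ∈ OmegaSeq) (b : ℕ → ℕ)
    (hb : SegDecomp ESegment x b) (u : ℕ → Letter)
    (hu : ∀ j, fword u (b j) (b (j + 1) - b j) = g0 (fword x (b j) (b (j + 1) - b j))) :
    SegDecomp FSegment u b := by
  obtain ⟨hb0, hseg⟩ := hb
  have hB : ∀ j, BlockImage x u (b j) (b (j + 1) - b j) :=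
    fun j => blockImage_of_eSegment (hseg j) (hu j)
  have hlt : ∀ j, b j < b (j + 1) := fun j => by have := (hB j).pos; omega
  have hmono : StrictMono b := strictMono_nat_of_lt_succ hlt
  have hF : ∀ j, FSpecial u (b j) (b (j + 1) - b j) ∨
      (b (j + 1) - b j = 1 ∧ EPlain x (b j) ∧ u (b j) = x (b j)) := by
    intro j
    refine (hB j).fSpecial (M := b (j + 1 + 1) - b (j + 1)) ?_
    rw [show b j + (b (j + 1) - b j) = b (j + 1) by have := hlt j; omega]
    exact hB (j + 1)
  refine ⟨hb0, fun j => (hF j).imp_right fun ⟨hL, hpl, hux⟩ => ⟨hL, ?_⟩⟩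
  rintro p L hp ⟨hpj, hjp⟩
  obtain ⟨i, rfl⟩ : ∃ i, p = b i := by
    obtain ⟨i, hi, hi'⟩ := exists_block hb0 hlt p
    refine ⟨i, ?_⟩
    by_contra hne
    have := (hB i).interior (i := p - b i) (by omega) (by omega)
    rw [show b i + (p - b i) = p by omega] at this
    rcases this with c | c <;> rcases hp.head with d | d <;>
      exact absurd (c.symm.trans d) (by decide)
  rcases hF i with hs | ⟨hLi, hpi, hui⟩
    -- The segment is the whole block `i`, so `b j` lies in block `i`, forcing `j = i`.
  · have hLeq := hp.length_unique hs
    have h1 : j < i + 1 := hmono.lt_iff_lt.1 (by have := hlt i; omega)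
    have h2 : i ≤ j := hmono.le_iff_le.1 hpj
    obtain rfl : i = j := by omega
    rcases hs with h | h | h <;> omega
  · have step : ∀ k, u (b k) = l2 ∨ u (b k) = l5 → b (k + 1) = b k + 1 ∧ u (b k) = x (b k) := by
      intro k hk
      have := (hB k).plain_of_head (by rcases hk with c | c <;> rw [c] <;> decide)
        (by rcases hk with c | c <;> rw [c] <;> decide)
      exact ⟨by omega, this.2⟩
    have hb1 : b (i + 1) = b i + 1 := by omega
    by_cases h4 : u (b i) = l4
    · obtain ⟨m, h2, h5, -⟩ := hp.shape h4
      have hcut : ∀ k, k ≤ m → b (i + (k + 1)) = b i + (k + 1) := by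
        intro k
        induction k with
        | zero => exact fun _ => hb1
        | succ k ih =>
          intro hk
          have e := ih (by omega)
          have := (step (i + (k + 1)) (Or.inl (by rw [e]; exact h2 _ (by omega) (by omega)))).1
          rw [e] at this
          exact this
      refine not_ePlain_of_eSpecial (p := b i) (L := m + 2)
        (Or.inr ⟨by omega, hui ▸ h4, fun k hk hk' => ?_, ?_⟩) hpi
      · obtain ⟨k, rfl⟩ := Nat.exists_eq_add_of_le' hk
        have e := hcut k (by omega)
        have v := h2 (k + 1) hk (by omega)
        have := (step (i + (k + 1)) (Or.inl (by rw [e]; exact v))).2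
        rw [e] at this
        rw [← this, v]
      · have e := hcut m le_rfl
        have := (step (i + (m + 1)) (Or.inr (by rw [e]; exact h5))).2
        rw [e] at this
        exact this.symm.trans h5
    · rcases hp with h | h | ⟨-, h3, h5⟩
      · exact h4 h.2.1
      · exact h4 h.2.1
      · have := (step (i + 1) (Or.inr (by rw [hb1]; exact h5))).2
        rw [hb1] at this
        obtain ⟨M, hM⟩ := exists_eSpecial_of_three_five hx (hui ▸ h3) (this ▸ h5)
        exact not_ePlain_of_eSpecial hM hpi
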